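/- arXiv:0810.3535 — 3 statements merged into one kernel-verified Lean document; each statement's English description precedes it below -/
import Mathlib

section
/- Let O be a commutative ring and π ∈ O. Let f and g be polynomials in O[X₀,X₁,X₂,X₃], each homogeneous of degree 3, with f not involving the variable X₃, and let a ∈ O be the coefficient of the monomial X₃³ in g. Set F = f + π³·g. Then there exists a polynomial h ∈ O[X₀,X₁,X₂,X₃], homogeneous of degree 3, such that the polynomial obtained from F by the substitution X₀ ↦ π·X₀, X₁ ↦ π·X₁, X₂ ↦ π·X₂, X₃ ↦ X₃ equals π³·(f + a·X₃³ + π·h). -/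
open MvPolynomial

/-!
Scaling every variable except `X j` by `π` multiplies the coefficient of a monomial `m` by `π`
to the degree of `m` in the variables other than `X j`. In degree `d` this exponent is `d` when
`X j` does not occur in `m`, and it is positive unless `m = X j ^ d`. Hence `f` acquires the factor
`π ^ d`, and all terms of `g` other than the one in `X j ^ d` become divisible by `π`.
-/

lemma degree_erase_ne_zero {σ : Type*} {j : σ} {m : σ →₀ ℕ}
    (hm : m ≠ Finsupp.single j m.degree) :
    (m.erase j).degree ≠ 0 := by
  intro h
  have m_eq : m = Finsupp.single j (m j) := by
    simpa only [(Finsupp.degree_eq_zero_iff _).mp h, add_zero] using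
      (Finsupp.single_add_erase j m).symm
  have degree_eq : m.degree = m j := by
    rw [m_eq, Finsupp.degree_single, Finsupp.single_eq_same]
  exact hm (degree_eq ▸ m_eq)

lemma exists_isHomogeneous_eq_C_mul {σ R : Type*} [CommSemiring R] {π : R} {d : ℕ}
    {p : MvPolynomial σ R} (hp : p.IsHomogeneous d) (hπ : C π ∣ p) :
    ∃ h : MvPolynomial σ R, h.IsHomogeneous d ∧ p = C π * h := by
  obtain ⟨q, rfl⟩ := hπ
  refine ⟨homogeneousComponent d q, homogeneousComponent_isHomogeneous d q, ?_⟩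
  rw [← homogeneousComponent_C_mul, homogeneousComponent_eq_self hp]

section ScaleExcept

variable {σ R : Type*} [DecidableEq σ]

section CommSemiring

variable [CommSemiring R]

/-- The change of variables `X i ↦ π X i` for `i ≠ j` and `X j ↦ X j`, as an algebra endomorphism
of the polynomial ring. -/
noncomputable def scaleExcept (π : R) (j : σ) : MvPolynomial σ R →ₐ[R] MvPolynomial σ R :=
  bind₁ fun i => if i = j then X j else C π * X i

variable (π : R) (j : σ)

lemma scaleExcept_X_self : scaleExcept π j (X j) = X j := by
  simp [scaleExcept]

lemma scaleExcept_X_of_ne {i : σ} (hi : i ≠ j) : scaleExcept π j (X i) = C π * X i := by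
  simp [scaleExcept, hi]

lemma scaleExcept_C (r : R) : scaleExcept π j (C r) = C r :=
  bind₁_C_right _ r

lemma scaleExcept_monomial (m : σ →₀ ℕ) (r : R) :
    scaleExcept π j (monomial m r) = C (π ^ (m.erase j).degree) * monomial m r := by
  have scale_erase : ((m.erase j).prod fun i k => scaleExcept π j (X i) ^ k) =
      C (π ^ (m.erase j).degree) * (m.erase j).prod fun i k => X i ^ k := by
    rw [Finsupp.degree_apply, ← Finset.prod_pow_eq_pow_sum, map_prod]
    simp only [Finsupp.prod, ← Finset.prod_mul_distrib]
    refine Finset.prod_congr rfl fun i hi => ?_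
    have hij : i ≠ j := by rintro rfl; simp at hi
    rw [scaleExcept_X_of_ne π j hij, mul_pow, map_pow]
  rw [monomial_eq, ← Finsupp.mul_prod_erase' m j _ fun _ => pow_zero _, map_mul, map_mul,
    map_pow, scaleExcept_C, scaleExcept_X_self, map_finsuppProd]
  simp only [map_pow] at scale_erase ⊢
  rw [scale_erase]
  ring

lemma coeff_scaleExcept (m : σ →₀ ℕ) (p : MvPolynomial σ R) :
    coeff m (scaleExcept π j p) = π ^ (m.erase j).degree * coeff m p := by
  induction p using MvPolynomial.induction_on' with
  | monomial n r =>
    rw [scaleExcept_monomial, coeff_C_mul, coeff_monomial]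
    split_ifs with hnm
    · rw [hnm]
    · simp only [mul_zero]
  | add p q hp hq => rw [map_add, coeff_add, coeff_add, hp, hq, mul_add]

variable {d : ℕ} {p : MvPolynomial σ R}

lemma isHomogeneous_scaleExcept (hp : p.IsHomogeneous d) :
    (scaleExcept π j p).IsHomogeneous d := by
  intro m hm
  rw [coeff_scaleExcept] at hm
  exact hp (right_ne_zero_of_mul hm)

lemma scaleExcept_eq_C_pow_mul (hp : p.IsHomogeneous d) (hpj : ∀ m ∈ p.support, m j = 0) :
    scaleExcept π j p = C (π ^ d) * p := by
  ext m
  rw [coeff_scaleExcept, coeff_C_mul]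
  by_cases hm : coeff m p = 0
  · simp only [hm, mul_zero]
  · have erase_eq : m.erase j = m :=
      Finsupp.erase_of_notMem_support (by simpa using hpj m (mem_support_iff.mpr hm))
    have degree_eq : m.degree = d := not_imp_comm.mp hp.coeff_eq_zero hm
    rw [erase_eq, degree_eq]

lemma C_dvd_scaleExcept (hp : p.IsHomogeneous d) (hpj : coeff (Finsupp.single j d) p = 0) :
    C π ∣ scaleExcept π j p := by
  refine (C_dvd_iff_dvd_coeff _ _).mpr fun m => ?_
  rw [coeff_scaleExcept]
  by_cases hm : coeff m p = 0
  · simp only [hm, mul_zero, dvd_zero]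
  · have degree_eq : m.degree = d := not_imp_comm.mp hp.coeff_eq_zero hm
    have m_ne : m ≠ Finsupp.single j m.degree := by
      intro m_eq
      rw [m_eq, degree_eq] at hm
      exact hm hpj
    exact (dvd_pow_self π (degree_erase_ne_zero m_ne)).mul_right _

end CommSemiring

variable [CommRing R] (π : R) (j : σ) {d : ℕ} {f g : MvPolynomial σ R}

lemma exists_scaleExcept_eq_add_C_mul (hg : g.IsHomogeneous d) :
    ∃ h : MvPolynomial σ R, h.IsHomogeneous d ∧
      scaleExcept π j g = C (g.coeff (Finsupp.single j d)) * X j ^ d + C π * h := by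
  let lead : MvPolynomial σ R := C (g.coeff (Finsupp.single j d)) * X j ^ d
  have scale_lead : scaleExcept π j lead = lead := by
    simp only [lead, map_mul, map_pow, scaleExcept_C, scaleExcept_X_self]
  have rest_homogeneous : (g - lead).IsHomogeneous d := hg.sub (isHomogeneous_C_mul_X_pow _ j d)
  have rest_coeff : coeff (Finsupp.single j d) (g - lead) = 0 := by
    simp [lead, coeff_X_pow]
  obtain ⟨h, h_homogeneous, scale_rest⟩ :=
    exists_isHomogeneous_eq_C_mul (isHomogeneous_scaleExcept π j rest_homogeneous)
      (C_dvd_scaleExcept π j rest_homogeneous rest_coeff)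
  refine ⟨h, h_homogeneous, ?_⟩
  rw [← scale_rest, map_sub, scale_lead, add_sub_cancel]

theorem stmt1_general (hf : f.IsHomogeneous d) (hg : g.IsHomogeneous d)
    (hfj : ∀ m ∈ f.support, m j = 0) :
    ∃ h : MvPolynomial σ R, h.IsHomogeneous d ∧
      scaleExcept π j (f + C (π ^ d) * g) =
        C (π ^ d) * (f + C (g.coeff (Finsupp.single j d)) * X j ^ d + C π * h) := by
  obtain ⟨h, h_homogeneous, scale_g⟩ := exists_scaleExcept_eq_add_C_mul π j hg
  refine ⟨h, h_homogeneous, ?_⟩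
  rw [map_add, map_mul, scaleExcept_C, scaleExcept_eq_C_pow_mul π j hf hfj, scale_g]
  ring

end ScaleExcept

/-- Let `O` be a commutative ring and `π ∈ O`.  Let `f, g ∈ O[X₀,X₁,X₂,X₃]` be
homogeneous of degree 3, with `f` not involving `X₃`, and let `a` be the
coefficient of `X₃³` in `g`.  Set `F = f + π³ g`.  Then there is a homogeneous
cubic `h` such that substituting `Xᵢ ↦ π Xᵢ` for `i = 0,1,2` in `F` yields
`π³ (f + a X₃³ + π h)`. -/
theorem stmt1 {O : Type*} [CommRing O] (π : O)
    (f g : MvPolynomial (Fin 4) O)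
    (hf : f.IsHomogeneous 3) (hg : g.IsHomogeneous 3)
    (hf3 : ∀ m ∈ f.support, m 3 = 0)
    (a : O) (ha : a = g.coeff (Finsupp.single 3 3))
    (F : MvPolynomial (Fin 4) O) (hF : F = f + C (π ^ 3) * g) :
    ∃ h : MvPolynomial (Fin 4) O, h.IsHomogeneous 3 ∧
      (bind₁ (fun i : Fin 4 => if i = 3 then X 3 else C π * X i)) F
        = C (π ^ 3) * (f + C a * X 3 ^ 3 + C π * h) := by
  subst ha hF
  exact stmt1_general π 3 hf hg hf3
end

section
/- Let F be an algebraically closed field in which 3 ≠ 0. Let f ∈ F[X₀,X₁,X₂,X₃] be homogeneous of degree 3 and not involving X₃, and suppose that the only common zero (x₀,x₁,x₂,x₃) ∈ F⁴ of the three partial derivatives ∂f/∂X₀, ∂f/∂X₁, ∂f/∂X₂ with x₃ = 0 is (0,0,0,0). Let a ∈ F be nonzero and set G = f + a·X₃³. Then the only common zero in F⁴ of the four partial derivatives ∂G/∂X₀, ∂G/∂X₁, ∂G/∂X₂, ∂G/∂X₃ is (0,0,0,0). -/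
open MvPolynomial

section

variable {σ R : Type*} [CommSemiring R] {f : MvPolynomial σ R} {i j : σ}

theorem notMem_vars_iff_forall_mem_support : j ∉ f.vars ↔ ∀ m ∈ f.support, m j = 0 := by
  simp only [mem_vars_iff_mem_support, Finsupp.mem_support_iff, not_exists, not_and, not_not]

theorem pderiv_add_C_mul_X_pow_self (hj : j ∉ f.vars) (a : R) (n : ℕ) :
    pderiv j (f + C a * X j ^ n) = C (a * n) * X j ^ (n - 1) := by
  rw [map_add, pderiv_eq_zero_of_notMem_vars hj, zero_add, pderiv_C_mul, pderiv_pow,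
    pderiv_X_self, mul_one, C_mul, map_natCast, mul_assoc]

theorem pderiv_add_C_mul_X_pow_of_ne (hij : i ≠ j) (a : R) (n : ℕ) :
    pderiv i (f + C a * X j ^ n) = pderiv i f := by
  rw [map_add, pderiv_C_mul, pderiv_pow, pderiv_X_of_ne hij.symm, mul_zero, mul_zero, add_zero]

theorem eq_zero_of_eval_pderiv_add_C_mul_X_pow_eq_zero [NoZeroDivisors R] (hj : j ∉ f.vars)
    {a : R} (ha : a ≠ 0) {n : ℕ} (hn : (n : R) ≠ 0) {x : σ → R}
    (hx : eval x (pderiv j (f + C a * X j ^ n)) = 0) : x j = 0 := by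
  have h_eval : a * n * x j ^ (n - 1) = 0 := by
    simpa only [pderiv_add_C_mul_X_pow_self hj, map_mul, map_pow, eval_C, eval_X] using hx
  exact eq_zero_of_pow_eq_zero ((mul_eq_zero.mp h_eval).resolve_left (mul_ne_zero ha hn))

theorem stmt2_general [NoZeroDivisors R] {n : ℕ} (hn : (n : R) ≠ 0) (hj : j ∉ f.vars)
    (hsm : ∀ x : σ → R, x j = 0 → (∀ i, i ≠ j → eval x (pderiv i f) = 0) → x = 0)
    {a : R} (ha : a ≠ 0) (x : σ → R)
    (hx : ∀ i, eval x (pderiv i (f + C a * X j ^ n)) = 0) : x = 0 := by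
  refine hsm x (eq_zero_of_eval_pderiv_add_C_mul_X_pow_eq_zero hj ha hn (hx j)) fun i hij => ?_
  rw [← pderiv_add_C_mul_X_pow_of_ne hij a n]
  exact hx i

end

/-- Let `F` be an algebraically closed field with `3 ≠ 0`.  Let
`f ∈ F[X₀,X₁,X₂,X₃]` be homogeneous of degree 3 not involving `X₃`, such that
the only common zero of `∂f/∂X₀, ∂f/∂X₁, ∂f/∂X₂` with `x₃ = 0` is the origin.
Let `a ≠ 0` and `G = f + a X₃³`.  Then the only common zero of the four partial
derivatives of `G` is the origin. -/
theorem stmt2 {F : Type*} [Field F] [IsAlgClosed F] (h3 : (3 : F) ≠ 0)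
    (f : MvPolynomial (Fin 4) F) (hf : f.IsHomogeneous 3)
    (hf3 : ∀ m ∈ f.support, m 3 = 0)
    (hsm : ∀ x : Fin 4 → F, x 3 = 0 →
      (∀ i : Fin 4, i ≠ 3 → eval x (pderiv i f) = 0) → x = 0)
    (a : F) (ha : a ≠ 0)
    (G : MvPolynomial (Fin 4) F) (hG : G = f + C a * X 3 ^ 3) :
    ∀ x : Fin 4 → F, (∀ i : Fin 4, eval x (pderiv i G) = 0) → x = 0 := by
  subst hG
  exact stmt2_general (mod_cast h3) (notMem_vars_iff_forall_mem_support.mpr hf3) hsm ha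
end

section
/- Let O be a discrete valuation ring with maximal ideal m and uniformizer π. Let f ∈ O[X₀,X₁,X₂,X₃] be homogeneous of degree 3 and not involving X₃, and let g ∈ O[X₀,X₁,X₂,X₃] be homogeneous of degree 3 whose coefficient of X₃³ is a unit of O. Let s be 1 or 2. Then there do not exist x₀, x₁, x₂ ∈ m and a unit x₃ ∈ O such that f(x₀,x₁,x₂,x₃) + π^s · g(x₀,x₁,x₂,x₃) = 0. -/
open MvPolynomial

/-!
Homogeneity of `f` puts its value in `m ^ 3`, since every variable occurring in `f` is evaluated
in `m`. Modulo `m` the point is supported on the last coordinate, so the value of `g` is a unit.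
A zero would therefore force `π ^ s ∈ m ^ 3`, which fails for `s < 3`.
-/

section CommSemiring

variable {R σ : Type*} [CommSemiring R] {p : MvPolynomial σ R} {n : ℕ}

theorem eval_mem_pow_of_isHomogeneous (hp : p.IsHomogeneous n) {I : Ideal R} {x : σ → R}
    (hx : ∀ i ∈ p.vars, x i ∈ I) : eval x p ∈ I ^ n := by
  rw [eval_eq]
  refine sum_mem fun d hd ↦ Ideal.mul_mem_left _ _ ?_
  rw [hp.degree_eq_sum_deg_support hd, ← Finset.prod_pow_eq_pow_sum]
  exact Ideal.prod_mem_prod fun i hi ↦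
    Ideal.pow_mem_pow (hx i ((mem_vars_iff_mem_support i).2 ⟨d, hd, hi⟩)) _

theorem eval_piSingle_of_isHomogeneous [DecidableEq σ] (hp : p.IsHomogeneous n) (j : σ) (a : R) :
    eval (Pi.single j a) p = p.coeff (Finsupp.single j n) * a ^ n := by
  have term_eq_zero : ∀ d ∈ p.support, d ≠ Finsupp.single j n →
      p.coeff d * ∏ i ∈ d.support, (Pi.single j a : σ → R) i ^ d i = 0 := by
    intro d hd hne
    obtain ⟨i, hi, hij⟩ : ∃ i ∈ d.support, i ≠ j := by
      by_contra! hsupp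
      obtain ⟨k, rfl⟩ := Finsupp.support_subset_singleton'.1
        fun i hi ↦ Finset.mem_singleton.2 (hsupp i hi)
      have hk := hp.degree_eq_sum_deg_support hd
      rw [← Finsupp.degree_apply, Finsupp.degree_single] at hk
      exact hne (by rw [hk])
    have hzero : (Pi.single j a : σ → R) i ^ d i = 0 := by
      rw [Pi.single_eq_of_ne hij, zero_pow (Finsupp.mem_support_iff.1 hi)]
    rw [Finset.prod_eq_zero hi hzero, mul_zero]
  rw [eval_eq, Finset.sum_eq_single (Finsupp.single j n) term_eq_zero
    fun h ↦ by rw [notMem_support_iff.1 h, zero_mul]]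
  have prod_eq : ((Finsupp.single j n).prod fun i e ↦ (Pi.single j a : σ → R) i ^ e) = a ^ n := by
    rw [Finsupp.prod_single_index, Pi.single_eq_same]
    exact pow_zero _
  exact congrArg _ prod_eq

end CommSemiring

section IsLocalRing

open IsLocalRing

variable {R σ : Type*} [CommRing R] [IsLocalRing R] {n k : ℕ}

theorem isUnit_eval_of_isHomogeneous {g : MvPolynomial σ R} (hg : g.IsHomogeneous k) {j : σ}
    (hgu : IsUnit (g.coeff (Finsupp.single j k))) {x : σ → R}
    (hx : ∀ i ≠ j, x i ∈ maximalIdeal R) (hxj : IsUnit (x j)) : IsUnit (eval x g) := by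
  classical
  have residue_comp : residue R ∘ x = Pi.single j (residue R (x j)) := by
    ext i
    obtain rfl | hij := eq_or_ne i j
    · rw [Function.comp_apply, Pi.single_eq_same]
    · rw [Function.comp_apply, Pi.single_eq_of_ne hij, residue_eq_zero_iff]
      exact hx i hij
  have residue_eval : residue R (eval x g) =
      residue R (g.coeff (Finsupp.single j k)) * residue R (x j) ^ k := by
    rw [eval₂_comp, ← eval_map, residue_comp,
      eval_piSingle_of_isHomogeneous (hg.map (residue R)), coeff_map]
  refine isUnit_of_map_unit (residue R) _ ?_
  rw [residue_eval]
  exact (hgu.map _).mul ((hxj.map _).pow k)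

theorem stmt3_general {f g : MvPolynomial σ R} {j : σ}
    (hf : f.IsHomogeneous n) (hfj : ∀ d ∈ f.support, d j = 0)
    (hg : g.IsHomogeneous k) (hgu : IsUnit (g.coeff (Finsupp.single j k)))
    {a : R} (ha : a ∉ maximalIdeal R ^ n) :
    ¬ ∃ x : σ → R, (∀ i ≠ j, x i ∈ maximalIdeal R) ∧ IsUnit (x j) ∧
      eval x f + a * eval x g = 0 := by
  rintro ⟨x, hx, hxj, hzero⟩
  have hvars : ∀ i ∈ f.vars, i ≠ j := by
    rintro i hi rfl
    obtain ⟨d, hd, hdi⟩ := (mem_vars_iff_mem_support i).1 hi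
    exact Finsupp.mem_support_iff.1 hdi (hfj d hd)
  have hfx : eval x f ∈ maximalIdeal R ^ n :=
    eval_mem_pow_of_isHomogeneous hf fun i hi ↦ hx i (hvars i hi)
  have hgx : IsUnit (eval x g) := isUnit_eval_of_isHomogeneous hg hgu hx hxj
  have hagx : a * eval x g ∈ maximalIdeal R ^ n :=
    (Ideal.add_mem_iff_right _ hfx).1 (hzero ▸ zero_mem _)
  exact ha ((Ideal.mul_unit_mem_iff_mem _ hgx).1 hagx)

end IsLocalRing

theorem pow_mem_maximalIdeal_pow_iff {O : Type*} [CommRing O] [IsDomain O]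
    [IsDiscreteValuationRing O] {π : O} (hπ : Irreducible π) {s n : ℕ} :
    π ^ s ∈ IsLocalRing.maximalIdeal O ^ n ↔ n ≤ s := by
  rw [hπ.maximalIdeal_eq, Ideal.span_singleton_pow, Ideal.mem_span_singleton,
    pow_dvd_pow_iff hπ.ne_zero hπ.not_isUnit]

/-- Let `O` be a discrete valuation ring with maximal ideal `m` and uniformizer
`π`.  Let `f ∈ O[X₀,X₁,X₂,X₃]` be homogeneous of degree 3 not involving `X₃`,
and let `g` be homogeneous of degree 3 whose coefficient of `X₃³` is a unit.
Let `s` be 1 or 2.  Then there are no `x₀, x₁, x₂ ∈ m` and unit `x₃ ∈ O` with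
`f(x) + π^s g(x) = 0`. -/
theorem stmt3 {O : Type*} [CommRing O] [IsDomain O] [IsDiscreteValuationRing O]
    (π : O) (hπ : Irreducible π)
    (f g : MvPolynomial (Fin 4) O)
    (hf : f.IsHomogeneous 3) (hf3 : ∀ m ∈ f.support, m 3 = 0)
    (hg : g.IsHomogeneous 3) (hgu : IsUnit (g.coeff (Finsupp.single 3 3)))
    (s : ℕ) (hs : s = 1 ∨ s = 2) :
    ¬ ∃ x : Fin 4 → O,
        x 0 ∈ IsLocalRing.maximalIdeal O ∧
        x 1 ∈ IsLocalRing.maximalIdeal O ∧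
        x 2 ∈ IsLocalRing.maximalIdeal O ∧
        IsUnit (x 3) ∧
        eval x f + π ^ s * eval x g = 0 := by
  rintro ⟨x, h0, h1, h2, h3, hzero⟩
  have hπs : π ^ s ∉ IsLocalRing.maximalIdeal O ^ 3 := by
    rw [pow_mem_maximalIdeal_pow_iff hπ]
    omega
  refine stmt3_general hf hf3 hg hgu hπs ⟨x, fun i hi ↦ ?_, h3, hzero⟩
  fin_cases i
  exacts [h0, h1, h2, absurd rfl hi]
end
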